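/- Let φ be a harmonic morphism between metric graphs Γ and Γ' given by a morphism of loopless models φ: (G, ℓ) → (G', ℓ'). Then the canonical divisors are related by K_Γ = φ*(K_{Γ'}) + R_φ, where R_φ = Σ_{v ∈ V(G)} ( 2(M_φ(v) − 1) − Σ_{e ∈ E_v(G)} (U_φ(e) − 1) )·(v). -/

import Mathlib

open scoped Classical

/-!
At a vertex `v` the identity amounts to `∑_{e ∋ v} U e = M v * val (φ v)`. To see this, group the
edges at `v` by their images: contracted edges have slope `0`, every other edge at `v` lies over an
edge at `φ v`, and by harmonicity the slopes over each edge at `φ v` add up to `M v`.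
-/

theorem sum_eq_card_nsmul_of_sum_fiber_eq {ι κ A : Type*} [AddCommMonoid A]
    {s : Finset ι} {t : Finset κ} {f : ι → Option κ} {w : ι → A} {a : A}
    (hmaps : ∀ i ∈ s, ∀ k, f i = some k → k ∈ t)
    (hnone : ∀ i ∈ s, f i = none → w i = 0)
    (hfiber : ∀ k ∈ t, ∑ i ∈ s with f i = some k, w i = a) :
    ∑ i ∈ s, w i = t.card • a := by
  have hmaps' : ∀ i ∈ s, f i ∈ t.insertNone := fun i hi =>
    Finset.mem_insertNone.2 (hmaps i hi)
  have hnone' : ∑ i ∈ s with f i = none, w i = 0 :=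
    Finset.sum_eq_zero fun i hi => hnone i (Finset.mem_filter.1 hi).1 (Finset.mem_filter.1 hi).2
  calc ∑ i ∈ s, w i
      = ∑ o ∈ t.insertNone, ∑ i ∈ s with f i = o, w i :=
        (Finset.sum_fiberwise_of_maps_to hmaps' w).symm
    _ = ∑ k ∈ t, ∑ i ∈ s with f i = some k, w i := by
        rw [Finset.sum_insertNone, hnone', zero_add]
    _ = t.card • a := Finset.sum_eq_card_nsmul hfiber

section Multigraph

variable {V E V' E' : Type*}

/-- The set `E_v` of edges incident to the vertex `v` of a locally finite multigraph, which is
encoded by the map `ends` sending each edge to its unordered pair of endpoints. -/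
noncomputable def edgesAt (ends : E → Sym2 V) (v : V) [Finite {e // v ∈ ends e}] : Finset E :=
  (Set.finite_coe_iff (s := {e | v ∈ ends e}).1 ‹_›).toFinset

theorem mem_edgesAt {ends : E → Sym2 V} {v : V} [Finite {e // v ∈ ends e}] {e : E} :
    e ∈ edgesAt ends v ↔ v ∈ ends e :=
  Set.Finite.mem_toFinset _

theorem edgesAt_eq_filter [Fintype E] (ends : E → Sym2 V) (v : V) :
    edgesAt ends v = Finset.univ.filter (fun e => v ∈ ends e) := by
  ext e
  rw [mem_edgesAt, Finset.mem_filter_univ]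

/-- The canonical divisor `K = ∑ v, (val v - 2) (v)`, divisors supported on the vertices being
encoded by their coefficient functions. A loop counts only once towards `val v`, so for a graph
with loops this is not the usual canonical divisor. -/
noncomputable def canonicalDivisor (ends : E → Sym2 V) [∀ v, Finite {e // v ∈ ends e}] :
    V → ℤ :=
  fun v => (edgesAt ends v).card - 2

theorem canonicalDivisor_apply (ends : E → Sym2 V) [∀ v, Finite {e // v ∈ ends e}] (v : V) :
    canonicalDivisor ends v = Nat.card {e // v ∈ ends e} - 2 :=
  congrArg (fun n : ℕ => (n : ℤ) - 2) (Nat.card_eq_card_finite_toFinset _).symm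

/-- The pullback `φ* D'` of a divisor along a morphism with vertex map `fV` and multiplicities
`M`. -/
def pullbackDivisor (fV : V → V') (M : V → ℤ) (D' : V' → ℤ) : V → ℤ :=
  fun v => M v * D' (fV v)

/-- The ramification divisor `R_φ` of a morphism with slopes `U` and multiplicities `M`. -/
noncomputable def ramificationDivisor (ends : E → Sym2 V) [∀ v, Finite {e // v ∈ ends e}]
    (U : E → ℤ) (M : V → ℤ) : V → ℤ :=
  fun v => 2 * (M v - 1) - ∑ e ∈ edgesAt ends v, (U e - 1)

/-- The edge map `fE` takes the value `none` on the contracted edges. -/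
theorem sum_edgesAt_eq_card_nsmul {A : Type*} [AddCommMonoid A]
    {ends : E → Sym2 V} {ends' : E' → Sym2 V'} {fV : V → V'} {fE : E → Option E'}
    (hends : ∀ e e', fE e = some e' → ends' e' = (ends e).map fV)
    {U : E → A} (hU : ∀ e, fE e = none → U e = 0) {v : V} {m : A}
    [Finite {e // v ∈ ends e}] [Finite {e' // fV v ∈ ends' e'}]
    (hharm : ∀ e', fV v ∈ ends' e' → ∑ e ∈ edgesAt ends v with fE e = some e', U e = m) :
    ∑ e ∈ edgesAt ends v, U e = (edgesAt ends' (fV v)).card • m := by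
  refine sum_eq_card_nsmul_of_sum_fiber_eq (fun e he e' hee' => ?_) (fun e _ => hU e)
    (fun e' he' => hharm e' (mem_edgesAt.1 he'))
  rw [mem_edgesAt, hends e e' hee']
  exact Sym2.mem_map.2 ⟨v, mem_edgesAt.1 he, rfl⟩

theorem riemann_hurwitz_divisor_metric_graphs_general
    {ends : E → Sym2 V} {ends' : E' → Sym2 V'}
    [∀ v, Finite {e // v ∈ ends e}] [∀ v', Finite {e' // v' ∈ ends' e'}]
    {fV : V → V'} {fE : E → Option E'}
    (hends : ∀ e e', fE e = some e' → ends' e' = (ends e).map fV)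
    {U : E → ℤ} (hU : ∀ e, fE e = none → U e = 0) {M : V → ℤ}
    (hharm : ∀ v e', fV v ∈ ends' e' →
      ∑ e ∈ edgesAt ends v with fE e = some e', U e = M v) :
    canonicalDivisor ends =
      pullbackDivisor fV M (canonicalDivisor ends') + ramificationDivisor ends U M := by
  funext v
  simp only [Pi.add_apply, canonicalDivisor, pullbackDivisor, ramificationDivisor,
    Finset.sum_sub_distrib, sum_edgesAt_eq_card_nsmul hends hU (hharm v), Finset.sum_const,
    nsmul_eq_mul]
  ring

end Multigraph

/-- **Riemann–Hurwitz for metric graphs, divisor form.**  For a harmonic morphism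
`φ : Γ → Γ'` of metric graphs given by a morphism of loopless models with slopes `U`
and multiplicities `M`: `K_Γ = φ*(K_{Γ'}) + R_φ`, where all three divisors are
supported on the vertices, `K_Γ(v) = val v − 2`, `(φ* K_{Γ'})(v) = M v (val (φ v) − 2)`
and `R_φ(v) = 2(M v − 1) − Σ_{e ∈ E_v} (U e − 1)`. -/
theorem riemann_hurwitz_divisor_metric_graphs
    (V E V' E' : Type) [Fintype V] [Fintype E] [Fintype V'] [Fintype E']
    (ends : E → Sym2 V) (ends' : E' → Sym2 V')
    (len : E → ℝ) (len' : E' → ℝ)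
    (hlen : ∀ e, 0 < len e) (hlen' : ∀ e', 0 < len' e')
    (hloopless : ∀ e, ¬ (ends e).IsDiag)
    (hloopless' : ∀ e', ¬ (ends' e').IsDiag)
    (hconn : (SimpleGraph.fromRel (fun u v => ∃ e, ends e = s(u, v))).Connected)
    (hconn' : (SimpleGraph.fromRel (fun u v => ∃ e', ends' e' = s(u, v))).Connected)
    (fV : V → V') (fE : E → E' ⊕ V')
    (hmorE : ∀ e e', fE e = Sum.inl e' → ends' e' = (ends e).map fV)
    (hmorV : ∀ e v', fE e = Sum.inr v' → (ends e).map fV = s(v', v'))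
    (U : E → ℕ)
    (hU1 : ∀ e e', fE e = Sum.inl e' → (U e : ℝ) = len' e' / len e)
    (hU2 : ∀ e v', fE e = Sum.inr v' → U e = 0)
    (M : V → ℕ)
    (hharm : ∀ v e', fV v ∈ ends' e' →
      (∑ e ∈ Finset.univ.filter (fun e => v ∈ ends e ∧ fE e = Sum.inl e'), U e) = M v)
    (d : ℕ)
    (hdeg : ∀ e', (∑ e ∈ Finset.univ.filter (fun e => fE e = Sum.inl e'), U e) = d)
    (hd0 : IsEmpty E' → d = 0)
    :
    (fun v : V => (Nat.card {e : E // v ∈ ends e} : ℤ) - 2) =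
      (fun v : V =>
        (M v : ℤ) * ((Nat.card {e' : E' // fV v ∈ ends' e'} : ℤ) - 2)
          + (2 * ((M v : ℤ) - 1)
            - ∑ e ∈ Finset.univ.filter (fun e => v ∈ ends e), ((U e : ℤ) - 1))) := by
  have hgen := riemann_hurwitz_divisor_metric_graphs_general (ends := ends) (ends' := ends')
    (fV := fV) (fE := fun e => (fE e).getLeft?) (U := fun e => U e) (M := fun v => M v)
    (fun e e' h => hmorE e e' (Sum.getLeft?_eq_some_iff.1 h))
    (fun e h => by
      obtain ⟨v', hv'⟩ := Sum.isRight_iff.1 (Sum.getLeft?_eq_none_iff.1 h)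
      exact_mod_cast hU2 e v' hv')
    (fun v e' h => by
      simp only [edgesAt_eq_filter, Finset.filter_filter, Sum.getLeft?_eq_some_iff]
      exact_mod_cast hharm v e' h)
  funext v
  simpa only [Pi.add_apply, canonicalDivisor_apply, pullbackDivisor,
    ramificationDivisor, edgesAt_eq_filter] using congrFun hgen v
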